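/- Let k ≥ 1 and let G = (V,E) be a finite simple triangle-free graph with |V| ≥ k. Then ∑_{i=1}^{k} λ_i(Q(G)) ≤ |E| + k². -/

import Mathlib

open Finset

/-- The `i`-th largest entry (1-indexed, so `i = 1` gives the maximum) of a tuple
`f : Fin n → ℝ`, counted with multiplicity. Junk value `0` outside the range `1 ≤ i ≤ n`. -/
noncomputable def ithLargest {n : ℕ} (f : Fin n → ℝ) (i : ℕ) : ℝ :=
  if h : 1 ≤ i ∧ i ≤ n then f (Tuple.sort f (Fin.rev ⟨i - 1, by omega⟩)) else 0

/-- The signless Laplacian matrix `Q(G) = D + A` of a finite simple graph. -/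
noncomputable def signlessLap {n : ℕ} (G : SimpleGraph (Fin n)) [DecidableRel G.Adj] :
    Matrix (Fin n) (Fin n) ℝ :=
  G.degMatrix ℝ + G.adjMatrix ℝ

theorem isHermitian_signlessLap {n : ℕ} (G : SimpleGraph (Fin n)) [DecidableRel G.Adj] :
    (signlessLap G).IsHermitian := by
  rw [Matrix.IsHermitian, Matrix.conjTranspose_eq_transpose_of_trivial]
  exact (SimpleGraph.isSymm_degMatrix ℝ G).add (SimpleGraph.isSymm_adjMatrix G)

/-- The eigenvalues of the signless Laplacian matrix of `G`
(as a tuple indexed by the vertices, with multiplicity). -/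
noncomputable def signlessLapEigs {n : ℕ} (G : SimpleGraph (Fin n)) [DecidableRel G.Adj] :
    Fin n → ℝ :=
  (isHermitian_signlessLap G).eigenvalues

/-- The degree sequence of `G`, as a real-valued tuple indexed by the vertices. -/
noncomputable def degTuple {n : ℕ} (G : SimpleGraph (Fin n)) [DecidableRel G.Adj] :
    Fin n → ℝ :=
  fun v => (G.degree v : ℝ)

/-!
The sum of the `k` largest eigenvalues of `Q` is `tr (Q P)` for an orthogonal projection `P` of rank
`k`, so with `a u = P u u` the sum minus `|E|` is `∑ (a u + a v + 2 P u v - 1)` over the edges `uv`.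
Each summand is at most `P u v ² / (1 - a u) + P u v ² / (1 - a v) + 2 a u a v`. Since `P² = P`, the
first two terms sum to at most `∑ u, a u = k`; by the weighted form of Mantel's theorem the last one
sums to at most `k² / 2`. This gives the bound `|E| + k + k² / 2`, which suffices unless `k = 1`.
For `k = 1`, the largest eigenvalue of `Q` is at most the maximum of `deg u + deg v` over the edges
`uv`, hence at most `|E| + 1`.
-/

theorem le_of_sq_le_mul {a b : ℝ} (hb : 0 ≤ b) (h : a ^ 2 ≤ a * b) : a ≤ b := by
  by_contra! hlt
  nlinarith

section Graph

variable {V : Type*} [Fintype V] {G : SimpleGraph V} [DecidableRel G.Adj]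

theorem sum_neighborFinset_comm {M : Type*} [AddCommMonoid M] (f : V → V → M) :
    ∑ u, ∑ v ∈ G.neighborFinset u, f v u = ∑ u, ∑ v ∈ G.neighborFinset u, f u v :=
  sum_comm' fun u v => by simp [G.adj_comm]

theorem two_mul_sum_neighborFinset (f : V → V → ℝ) :
    2 * ∑ u, ∑ v ∈ G.neighborFinset u, f u v =
      ∑ u, ∑ v ∈ G.neighborFinset u, (f u v + f v u) := by
  simp only [sum_add_distrib]
  rw [sum_neighborFinset_comm f, two_mul]

theorem two_mul_sum_neighborFinset_mul_le {w : V → V → ℝ} (hsymm : ∀ u v, w u v = w v u)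
    (hw : ∀ u v, 0 ≤ w u v) {g : V → ℝ} {c : ℝ} (hg : ∀ u v, G.Adj u v → g u + g v ≤ c) :
    2 * ∑ u, ∑ v ∈ G.neighborFinset u, g u * w u v ≤
      c * ∑ u, ∑ v ∈ G.neighborFinset u, w u v := by
  calc 2 * ∑ u, ∑ v ∈ G.neighborFinset u, g u * w u v
      = ∑ u, ∑ v ∈ G.neighborFinset u, (g u + g v) * w u v := by
        simp only [two_mul_sum_neighborFinset, add_mul, hsymm]
    _ ≤ ∑ u, ∑ v ∈ G.neighborFinset u, c * w u v := by
        gcongr with u _ v hv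
        · exact hw u v
        · exact hg u v ((G.mem_neighborFinset u v).1 hv)
    _ = c * ∑ u, ∑ v ∈ G.neighborFinset u, w u v := by simp only [mul_sum]

theorem sum_neighborFinset_add_le_of_cliqueFree (hG : G.CliqueFree 3) {a : V → ℝ}
    (ha : ∀ u, 0 ≤ a u) {u v : V} (huv : G.Adj u v) :
    ∑ w ∈ G.neighborFinset u, a w + ∑ w ∈ G.neighborFinset v, a w ≤ ∑ w, a w := by
  classical
  have hdisj : Disjoint (G.neighborFinset u) (G.neighborFinset v) := by
    refine disjoint_left.2 fun w hu hv => hG {u, v, w} ?_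
    rw [SimpleGraph.mem_neighborFinset] at hu hv
    exact SimpleGraph.is3Clique_triple_iff.2 ⟨huv, hu, hv⟩
  rw [← sum_union hdisj]
  exact sum_le_univ_sum_of_nonneg ha

-- The Motzkin–Straus form of Mantel's theorem.
theorem sum_neighborFinset_mul_le_of_cliqueFree (hG : G.CliqueFree 3) {a : V → ℝ}
    (ha : ∀ u, 0 ≤ a u) :
    ∑ u, ∑ v ∈ G.neighborFinset u, a u * a v ≤ (∑ u, a u) ^ 2 / 2 := by
  set M := ∑ u, ∑ v ∈ G.neighborFinset u, a u * a v with hM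
  set K := ∑ u, a u
  let s : V → ℝ := fun u => ∑ v ∈ G.neighborFinset u, a v
  have hK_nonneg : 0 ≤ K := sum_nonneg fun u _ => ha u
  have hcauchy : M ^ 2 ≤ K * ∑ u, a u * s u ^ 2 := by
    simp only [hM, ← mul_sum]
    exact sum_sq_le_sum_mul_sum_of_sq_le_mul _ (fun u _ => ha u)
      (fun u _ => mul_nonneg (ha u) (sq_nonneg _)) fun u _ => by simp only [s]; linarith
  have hedges : 2 * ∑ u, a u * s u ^ 2 ≤ K * M := by
    convert two_mul_sum_neighborFinset_mul_le (fun u v => mul_comm (a u) (a v))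
      (fun u v => mul_nonneg (ha u) (ha v))
      (fun _ _ => sum_neighborFinset_add_le_of_cliqueFree hG ha) using 3 with u
    simp only [s, ← mul_sum]
    ring
  refine le_of_sq_le_mul (by positivity) ?_
  calc M ^ 2 ≤ K * ∑ u, a u * s u ^ 2 := hcauchy
    _ ≤ K * (K * M / 2) := by gcongr; linarith
    _ = M * (K ^ 2 / 2) := by ring

theorem degree_add_degree_le_card_edgeFinset_add_one {u v : V} (huv : G.Adj u v) :
    G.degree u + G.degree v ≤ #G.edgeFinset + 1 := by
  classical
  have hunion : #(G.incidenceFinset u ∪ G.incidenceFinset v) ≤ #G.edgeFinset :=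
    card_le_card (union_subset (G.incidenceFinset_subset u) (G.incidenceFinset_subset v))
  have hinter : #(G.incidenceFinset u ∩ G.incidenceFinset v) ≤ 1 := by
    have hsub : G.incidenceFinset u ∩ G.incidenceFinset v ⊆ {s(u, v)} := by
      simpa [← coe_subset] using G.incidenceSet_inter_incidenceSet_subset huv.ne
    simpa using card_le_card hsub
  have hcard := card_union_add_card_inter (G.incidenceFinset u) (G.incidenceFinset v)
  simp only [SimpleGraph.card_incidenceFinset_eq_degree] at hcard
  omega

theorem sum_neighborFinset_add_sq_le (x : V → ℝ) :
    ∑ u, ∑ v ∈ G.neighborFinset u, (x u + x v) ^ 2 ≤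
      2 * (#G.edgeFinset + 1) * ∑ u, x u ^ 2 := by
  set S := ∑ u, ∑ v ∈ G.neighborFinset u, (x u + x v) ^ 2 with hS
  let z : V → ℝ := fun u => ∑ v ∈ G.neighborFinset u, (x u + x v)
  have hS_eq : S = 2 * ∑ u, x u * z u := by
    simp only [z, mul_sum (G.neighborFinset _), two_mul_sum_neighborFinset, hS]
    exact sum_congr rfl fun u _ => sum_congr rfl fun v _ => by ring
  have hcauchy : (∑ u, x u * z u) ^ 2 ≤ (∑ u, x u ^ 2) * ∑ u, z u ^ 2 :=
    sum_mul_sq_le_sq_mul_sq _ _ _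
  have hz : ∑ u, z u ^ 2 ≤ ∑ u, ∑ v ∈ G.neighborFinset u, G.degree u * (x u + x v) ^ 2 := by
    simp only [← mul_sum, ← SimpleGraph.card_neighborFinset_eq_degree]
    gcongr
    exact sq_sum_le_card_mul_sum_sq
  have hedges : 2 * ∑ u, ∑ v ∈ G.neighborFinset u, G.degree u * (x u + x v) ^ 2 ≤
      (#G.edgeFinset + 1) * S :=
    two_mul_sum_neighborFinset_mul_le (fun u v => by ring) (fun u v => sq_nonneg _)
      fun u v huv => mod_cast degree_add_degree_le_card_edgeFinset_add_one huv
  refine le_of_sq_le_mul (by positivity) ?_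
  calc S ^ 2 = 4 * (∑ u, x u * z u) ^ 2 := by rw [hS_eq]; ring
    _ ≤ 4 * ((∑ u, x u ^ 2) * ((#G.edgeFinset + 1) * S / 2)) := by
        gcongr
        refine hcauchy.trans ?_
        gcongr
        linarith
    _ = S * (2 * (#G.edgeFinset + 1) * ∑ u, x u ^ 2) := by ring

theorem two_mul_trace_degMatrix_add_adjMatrix_mul [DecidableEq V] {P : Matrix V V ℝ}
    (hP : P.IsSymm) :
    2 * ((G.degMatrix ℝ + G.adjMatrix ℝ) * P).trace =
      ∑ u, ∑ v ∈ G.neighborFinset u, (P u u + P v v + 2 * P u v) := by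
  have htrace : ((G.degMatrix ℝ + G.adjMatrix ℝ) * P).trace =
      ∑ u, ∑ v ∈ G.neighborFinset u, (P u u + P u v) := by
    simp [Matrix.trace, add_mul, SimpleGraph.degMatrix, sum_add_distrib, hP.apply]
  rw [htrace, two_mul_sum_neighborFinset]
  refine sum_congr rfl fun u _ => sum_congr rfl fun v _ => ?_
  rw [hP.apply u v]
  ring

theorem trace_degMatrix_add_adjMatrix_mul_vecMulVec_le [DecidableEq V] (x : V → ℝ) :
    ((G.degMatrix ℝ + G.adjMatrix ℝ) * Matrix.vecMulVec x x).trace ≤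
      (#G.edgeFinset + 1) * (Matrix.vecMulVec x x).trace := by
  have hedges := two_mul_trace_degMatrix_add_adjMatrix_mul (G := G)
    (Matrix.transpose_vecMulVec x x)
  have hsq : ∑ u, ∑ v ∈ G.neighborFinset u, (x u * x u + x v * x v + 2 * (x u * x v)) =
      ∑ u, ∑ v ∈ G.neighborFinset u, (x u + x v) ^ 2 :=
    sum_congr rfl fun u _ => sum_congr rfl fun v _ => by ring
  have htrace : (Matrix.vecMulVec x x).trace = ∑ u, x u ^ 2 := by
    simp only [Matrix.trace_vecMulVec, dotProduct, sq]
  simp only [Matrix.vecMulVec_apply, hsq] at hedges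
  rw [htrace]
  linarith [sum_neighborFinset_add_sq_le (G := G) x]

end Graph

theorem add_sub_one_add_two_mul_le_of_lt_one {a b : ℝ} (ha : 0 ≤ a) (ha' : a < 1) (hb : 0 ≤ b)
    (hb' : b < 1) (p : ℝ) :
    a + b - 1 + 2 * p ≤ p ^ 2 / (1 - a) + p ^ 2 / (1 - b) + 2 * (a * b) := by
  have hx : 0 < 1 - a := sub_pos.2 ha'
  have hy : 0 < 1 - b := sub_pos.2 hb'
  have hab : 0 ≤ 1 - a * b := by nlinarith
  have hdiff : p ^ 2 / (1 - a) + p ^ 2 / (1 - b) + 2 * (a * b) - (a + b - 1 + 2 * p) =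
      (p * ((1 - a) + (1 - b)) - (1 - a) * (1 - b)) ^ 2 /
          ((1 - a) * (1 - b) * ((1 - a) + (1 - b))) +
        (a * b * (1 - a * b) + ((1 - a) * (1 - b)) ^ 2) / ((1 - a) + (1 - b)) := by
    field_simp
    ring
  rw [← sub_nonneg, hdiff]
  positivity

-- At `a = 1` the hypothesis forces `p = 0`, and `p ^ 2 / (1 - a) = 0 / 0 = 0` is the right value.
theorem add_sub_one_add_two_mul_le {a b p : ℝ} (ha : p ^ 2 ≤ a * (1 - a))
    (hb : p ^ 2 ≤ b * (1 - b)) :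
    a + b - 1 + 2 * p ≤ p ^ 2 / (1 - a) + p ^ 2 / (1 - b) + 2 * (a * b) := by
  have ha0 : 0 ≤ a := by nlinarith [sq_nonneg p]
  have hb0 : 0 ≤ b := by nlinarith [sq_nonneg p]
  have ha1 : a ≤ 1 := by nlinarith [sq_nonneg p]
  have hb1 : b ≤ 1 := by nlinarith [sq_nonneg p]
  rcases ha1.eq_or_lt with rfl | ha1
  · obtain rfl : p = 0 := by nlinarith
    simp only [zero_pow two_ne_zero, zero_div]
    linarith
  rcases hb1.eq_or_lt with rfl | hb1
  · obtain rfl : p = 0 := by nlinarith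
    simp only [zero_pow two_ne_zero, zero_div]
    linarith
  exact add_sub_one_add_two_mul_le_of_lt_one ha0 ha1 hb0 hb1 p

section Projection

variable {V : Type*} [Fintype V] {P : Matrix V V ℝ}

theorem sum_sq_le_diag_mul_one_sub_diag {u : V} (hP : ∑ v, P u v ^ 2 ≤ P u u) {s : Finset V}
    (hu : u ∉ s) : ∑ v ∈ s, P u v ^ 2 ≤ P u u * (1 - P u u) := by
  classical
  have hinsert : ∑ v ∈ insert u s, P u v ^ 2 ≤ ∑ v, P u v ^ 2 :=
    sum_le_univ_sum_of_nonneg fun v => sq_nonneg _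
  rw [sum_insert hu] at hinsert
  linarith

theorem sum_sq_div_one_sub_diag_le {u : V} (hP : ∑ v, P u v ^ 2 ≤ P u u) {s : Finset V}
    (hu : u ∉ s) : ∑ v ∈ s, P u v ^ 2 / (1 - P u u) ≤ P u u := by
  have hnum := sum_sq_le_diag_mul_one_sub_diag hP hu
  have hsq : 0 ≤ ∑ v ∈ s, P u v ^ 2 := sum_nonneg fun v _ => sq_nonneg _
  have hdiag : 0 ≤ P u u := (sum_nonneg fun v _ => sq_nonneg _).trans hP
  rw [← sum_div]
  exact div_le_of_le_mul₀ (by nlinarith) hdiag hnum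

theorem sum_sq_eq_diag_of_isIdempotentElem (hsymm : P.IsSymm) (hP : IsIdempotentElem P) (u : V) :
    ∑ v, P u v ^ 2 = P u u := by
  conv_rhs => rw [← hP.eq, Matrix.mul_apply]
  exact sum_congr rfl fun v _ => by rw [hsymm.apply u v, sq]

theorem trace_degMatrix_add_adjMatrix_mul_le_of_cliqueFree [DecidableEq V] {G : SimpleGraph V}
    [DecidableRel G.Adj] (hG : G.CliqueFree 3) (hsymm : P.IsSymm)
    (hP : ∀ u, ∑ v, P u v ^ 2 ≤ P u u) :
    ((G.degMatrix ℝ + G.adjMatrix ℝ) * P).trace ≤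
      #G.edgeFinset + P.trace + P.trace ^ 2 / 2 := by
  have hentry {u v : V} (huv : u ≠ v) : P u v ^ 2 ≤ P u u * (1 - P u u) := by
    simpa using sum_sq_le_diag_mul_one_sub_diag (hP u) (notMem_singleton.2 huv)
  have hedge (u v : V) (huv : v ∈ G.neighborFinset u) : P u u + P v v + 2 * P u v ≤
      1 + (P u v ^ 2 / (1 - P u u) + P v u ^ 2 / (1 - P v v)) + 2 * (P u u * P v v) := by
    have hne : u ≠ v := ((G.mem_neighborFinset u v).1 huv).ne
    have hvu := hentry hne.symm
    rw [hsymm.apply u v] at hvu ⊢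
    linarith [add_sub_one_add_two_mul_le (hentry hne) hvu]
  have hone : ∑ u, ∑ _v ∈ G.neighborFinset u, (1 : ℝ) = 2 * #G.edgeFinset := by
    simpa using mod_cast G.sum_degrees_eq_twice_card_edges
  have hdiv : ∑ u, ∑ v ∈ G.neighborFinset u, P u v ^ 2 / (1 - P u u) ≤ P.trace :=
    sum_le_sum fun u _ => sum_sq_div_one_sub_diag_le (hP u) (G.notMem_neighborFinset_self u)
  have hmantel : ∑ u, ∑ v ∈ G.neighborFinset u, P u u * P v v ≤ P.trace ^ 2 / 2 :=
    sum_neighborFinset_mul_le_of_cliqueFree hG fun u =>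
      (sum_nonneg fun _ _ => sq_nonneg _).trans (hP u)
  have hsum := sum_le_sum fun u (_ : u ∈ univ) => sum_le_sum (hedge u)
  rw [← two_mul_trace_degMatrix_add_adjMatrix_mul hsymm] at hsum
  simp only [sum_add_distrib, ← mul_sum _ _ (2 : ℝ)] at hsum
  rw [hone, sum_neighborFinset_comm fun u v => P u v ^ 2 / (1 - P u u)] at hsum
  linarith

end Projection

theorem exists_injective_sum_ithLargest_eq {n k : ℕ} (f : Fin n → ℝ) (hk : k ≤ n) :
    ∃ g : Fin k → Fin n, Function.Injective g ∧
      ∑ i ∈ Icc 1 k, ithLargest f i = ∑ j, f (g j) := by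
  refine ⟨fun j => Tuple.sort f (Fin.castLE hk j).rev, (Tuple.sort f).injective.comp
    (Fin.rev_injective.comp (Fin.castLE_injective hk)), ?_⟩
  have hshift : ∑ i ∈ Icc 1 k, ithLargest f i = ∑ j : Fin k, ithLargest f (j + 1) := by
    rw [← Ico_succ_right_eq_Icc, ← sum_range fun j => ithLargest f (j + 1), range_eq_Ico,
      sum_Ico_add' (ithLargest f), zero_add, Nat.succ_eq_succ]
  rw [hshift]
  exact sum_congr rfl fun j _ => dif_pos ⟨by omega, by omega⟩

open scoped Matrix in
theorem exists_transpose_mul_self_eq_one_sum_eigenvalues_eq {m ι : Type*} [Fintype m]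
    [DecidableEq m] [Fintype ι] [DecidableEq ι] {A : Matrix m m ℝ} (hA : A.IsHermitian) {g : ι → m}
    (hg : Function.Injective g) :
    ∃ X : Matrix m ι ℝ, Xᵀ * X = 1 ∧ ∑ j, hA.eigenvalues (g j) = (Xᵀ * A * X).trace := by
  let U : Matrix m m ℝ := hA.eigenvectorUnitary
  have hU : Uᵀ * U = 1 := Unitary.coe_star_mul_self hA.eigenvectorUnitary
  have hdiag : Uᵀ * A * U = Matrix.diagonal hA.eigenvalues := by
    have hconj := hA.conjStarAlgAut_star_eigenvectorUnitary
    rwa [Unitary.conjStarAlgAut_star_apply] at hconj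
  refine ⟨U.submatrix id g, ?_, ?_⟩
  · rw [Matrix.transpose_submatrix, ← Matrix.submatrix_mul _ _ _ _ _ Function.bijective_id, hU,
      Matrix.submatrix_one _ hg]
  · have hsub : (U.submatrix id g)ᵀ * A * U.submatrix id g = (Uᵀ * A * U).submatrix g g := rfl
    rw [hsub, hdiag, Matrix.submatrix_diagonal _ _ hg, Matrix.trace_diagonal]
    rfl

open scoped Matrix in
theorem exists_transpose_mul_self_eq_one_sum_ithLargest_eigenvalues_eq {n k : ℕ}
    {A : Matrix (Fin n) (Fin n) ℝ} (hA : A.IsHermitian) (hk : k ≤ n) :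
    ∃ X : Matrix (Fin n) (Fin k) ℝ, Xᵀ * X = 1 ∧
      ∑ i ∈ Icc 1 k, ithLargest hA.eigenvalues i = (Xᵀ * A * X).trace := by
  obtain ⟨g, hg, hsum⟩ := exists_injective_sum_ithLargest_eq hA.eigenvalues hk
  obtain ⟨X, hX, htrace⟩ := exists_transpose_mul_self_eq_one_sum_eigenvalues_eq hA hg
  exact ⟨X, hX, hsum.trans htrace⟩

open scoped Matrix in
theorem sum_signlessLapEigs_le_of_triangleFree_general {V ι : Type*} [Fintype V] [DecidableEq V]
    [Fintype ι] [DecidableEq ι] {G : SimpleGraph V} [DecidableRel G.Adj] (hG : G.CliqueFree 3)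
    {X : Matrix V ι ℝ} (hX : Xᵀ * X = 1) :
    (Xᵀ * (G.degMatrix ℝ + G.adjMatrix ℝ) * X).trace ≤
      #G.edgeFinset + (Fintype.card ι : ℝ) ^ 2 := by
  have hsymm : (X * Xᵀ).IsSymm := by
    rw [Matrix.IsSymm, Matrix.transpose_mul, Matrix.transpose_transpose]
  have hidem : IsIdempotentElem (X * Xᵀ) := by
    rw [IsIdempotentElem, Matrix.mul_assoc, ← Matrix.mul_assoc Xᵀ, hX, Matrix.one_mul]
  have htrace : (X * Xᵀ).trace = Fintype.card ι := by
    rw [Matrix.trace_mul_comm, hX, Matrix.trace_one]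
  rw [Matrix.mul_assoc, Matrix.trace_mul_comm, Matrix.mul_assoc]
  by_cases hι : Fintype.card ι = 1
  · obtain ⟨i, hi⟩ := Fintype.card_eq_one_iff.1 hι
    have hrank_one : X * Xᵀ = Matrix.vecMulVec (X.col i) (X.col i) := by
      ext u v
      rw [Matrix.mul_apply, Fintype.sum_eq_single i fun j hj => absurd (hi j) hj]
      rfl
    have hbound := trace_degMatrix_add_adjMatrix_mul_vecMulVec_le (G := G) (X.col i)
    rw [← hrank_one, htrace, hι] at hbound
    simpa [hι] using hbound
  · have hbound := trace_degMatrix_add_adjMatrix_mul_le_of_cliqueFree hG hsymm fun u =>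
      (sum_sq_eq_diag_of_isIdempotentElem hsymm hidem u).le
    have hcard : 2 * Fintype.card ι ≤ Fintype.card ι ^ 2 := by
      obtain h | h : Fintype.card ι = 0 ∨ 2 ≤ Fintype.card ι := by omega
      · simp [h]
      · nlinarith
    have hcard' : 2 * (Fintype.card ι : ℝ) ≤ (Fintype.card ι : ℝ) ^ 2 := mod_cast hcard
    rw [htrace] at hbound
    linarith

/-- for `k ≥ 1` and a triangle-free graph `G` with at least `k` vertices,
`∑_{i=1}^k λ_i(Q(G)) ≤ |E| + k²`. -/
theorem sum_signlessLapEigs_le_of_triangleFree {n : ℕ} (G : SimpleGraph (Fin n))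
    [DecidableRel G.Adj] (hG : G.CliqueFree 3) (k : ℕ) (hk1 : 1 ≤ k) (hk2 : k ≤ n) :
    ∑ i ∈ Finset.Icc 1 k, ithLargest (signlessLapEigs G) i ≤
      (G.edgeFinset.card : ℝ) + (k : ℝ) ^ 2 := by
  obtain ⟨X, hX, hsum⟩ :=
    exists_transpose_mul_self_eq_one_sum_ithLargest_eigenvalues_eq (isHermitian_signlessLap G) hk2
  simpa [signlessLapEigs] using
    hsum.trans_le (sum_signlessLapEigs_le_of_triangleFree_general hG hX)
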